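/- Let G be a group, let σ and Fr be automorphisms of G, and let q be a positive integer such that Fr⁻¹ ∘ σ ∘ Fr = σ^q. Fix g ∈ G and set n_σ := g⁻¹·σ(g) and n_Fr := g⁻¹·Fr(g), and for x ∈ G set N_q(x) := x·σ(x)·σ²(x)···σ^{q−1}(x). Then Fr(N_q(n_σ)) = n_Fr⁻¹ · n_σ · σ(n_Fr). -/

import Mathlib

section TwistedNorm

variable {M G : Type*} [Monoid M]

/-- The norm `x * s • x * ⋯ * s ^ (n - 1) • x` of an element `x` of a monoid on which `s` acts,
written `N_n(x)` in the paper. It is an ordered list product because `G` need not be commutative. -/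
def twistedNorm [Monoid G] [MulDistribMulAction M G] (s : M) (n : ℕ) (x : G) : G :=
  ((List.range n).map fun i ↦ s ^ i • x).prod

variable [Group G] [MulDistribMulAction M G]

theorem twistedNorm_inv_mul_smul (s : M) (n : ℕ) (g : G) :
    twistedNorm s n (g⁻¹ * s • g) = g⁻¹ * s ^ n • g := by
  have factor_eq_div (i : ℕ) :
      s ^ i • (g⁻¹ * s • g) = (s ^ i • g)⁻¹ / (s ^ (i + 1) • g)⁻¹ := by
    rw [smul_mul', smul_inv', smul_smul, ← pow_succ, div_inv_eq_mul]
  simp only [twistedNorm, factor_eq_div]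
  rw [List.prod_range_div' n fun i ↦ (s ^ i • g)⁻¹, pow_zero, one_smul, div_inv_eq_mul]

theorem inv_mul_smul_mul (s : M) (g h : G) :
    (g * h)⁻¹ * s • (g * h) = h⁻¹ * (g⁻¹ * s • g) * s • h := by
  simp only [mul_inv_rev, smul_mul', mul_assoc]

theorem frobenius_norm_formula_general (s f : M) (q : ℕ) (hcomm : s * f = f * s ^ q) (g : G) :
    f • twistedNorm s q (g⁻¹ * s • g) =
      (g⁻¹ * f • g)⁻¹ * (g⁻¹ * s • g) * s • (g⁻¹ * f • g) :=
  calc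
    f • twistedNorm s q (g⁻¹ * s • g) = f • (g⁻¹ * s ^ q • g) := by
      rw [twistedNorm_inv_mul_smul]
    _ = (f • g)⁻¹ * s • f • g := by
      rw [smul_mul', smul_inv', smul_smul, ← hcomm, mul_smul]
    _ = (g⁻¹ * f • g)⁻¹ * (g⁻¹ * s • g) * s • (g⁻¹ * f • g) := by
      rw [← inv_mul_smul_mul, mul_inv_cancel_left]

end TwistedNorm

/-- Let `G` be a group with automorphisms `σ` and `Fr` and a positive integer `q`
such that `Fr⁻¹ ∘ σ ∘ Fr = σ^q`.  For `g ∈ G` set `n_σ = g⁻¹·σ(g)`,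
`n_Fr = g⁻¹·Fr(g)`, and `N_q(x) = x·σ(x)·σ²(x)···σ^{q-1}(x)`.  Then
`Fr(N_q(n_σ)) = n_Fr⁻¹ · n_σ · σ(n_Fr)`. -/
theorem frobenius_norm_formula {G : Type*} [Group G] (σ Fr : MulAut G)
    (q : ℕ) (hq : 0 < q) (hcomm : Fr⁻¹ * σ * Fr = σ ^ q) (g : G) :
    Fr (((List.range q).map (fun i => (σ ^ i) (g⁻¹ * σ g))).prod) =
      (g⁻¹ * Fr g)⁻¹ * (g⁻¹ * σ g) * σ (g⁻¹ * Fr g) :=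
  frobenius_norm_formula_general σ Fr q (by rw [← hcomm, mul_assoc, mul_inv_cancel_left]) g
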